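/- arXiv:2601.22994 — 2 statements merged into one kernel-verified Lean document; each statement's English description precedes it below -/
import Mathlib

section
/- For every integer 0 ≤ j ≤ n(n−1)/2 + 1, the left R-submodule Γ_j of R ⊗_{R^{S_n}} R spanned by {S_w : ℓ(w) ≥ j} equals the kernel of the R-bimodule homomorphism ⊕_{w : ℓ(w) < j} F_w : R ⊗_{R^{S_n}} R → ⊕_{w : ℓ(w) < j} R_w. In particular, Γ_j is a sub-R-bimodule of R ⊗_{R^{S_n}} R, i.e., it is stable under the right R-action. -/
open MvPolynomial

noncomputable section

/-- `R n` is the polynomial ring `ℂ[x_1, …, x_n]`. -/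
abbrev R (n : ℕ) := MvPolynomial (Fin n) ℂ

/-- The inversion set of a permutation. -/
def invSet (n : ℕ) (w : Equiv.Perm (Fin n)) : Finset (Fin n × Fin n) :=
  Finset.univ.filter fun p => p.1 < p.2 ∧ w p.2 < w p.1

/-- The Coxeter length of a permutation, i.e. its number of inversions. -/
def len (n : ℕ) (w : Equiv.Perm (Fin n)) : ℕ := (invSet n w).card

/-- `Δ_w = ∏_{(i,j) ∈ inv(w)} (x_i - x_j)`. -/
def Δpoly (n : ℕ) (w : Equiv.Perm (Fin n)) : R n :=
  ∏ p ∈ invSet n w, (X p.1 - X p.2)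

/-- The simple reflection `s_j = (j, j+1)` (1-based `j` corresponds to 0-based index here);
for out-of-range indices we use the identity. -/
def simpleRefl (n : ℕ) (j : ℕ) : Equiv.Perm (Fin n) :=
  if hj : j + 1 < n then Equiv.swap ⟨j, Nat.lt_of_succ_lt hj⟩ ⟨j + 1, hj⟩ else 1

open Classical in
/-- The Demazure operator `∂_j = (id - s_j)/(x_j - x_{j+1})` on `R n`. -/
def demX (n : ℕ) (j : ℕ) (h : R n) : R n :=
  if hj : j + 1 < n then
    let a : Fin n := ⟨j, Nat.lt_of_succ_lt hj⟩
    let b : Fin n := ⟨j + 1, hj⟩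
    if hd : (X a - X b : R n) ∣ (h - rename (Equiv.swap a b) h) then hd.choose else 0
  else 0

/-- Composite Demazure operator along a word `[a_1, …, a_k]`:
`∂_{a_1} ∘ ⋯ ∘ ∂_{a_k}`. -/
def demWord (n : ℕ) (l : List ℕ) (h : R n) : R n := l.foldr (demX n) h

/-- `l` is a reduced word for `w`: `w = s_{a_1} ⋯ s_{a_k}` with `k = ℓ(w)`. -/
def IsReducedWord (n : ℕ) (w : Equiv.Perm (Fin n)) (l : List ℕ) : Prop :=
  (l.map (simpleRefl n)).prod = w ∧ l.length = len n w

open Classical in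
/-- The Demazure operator `∂_w` of a permutation, computed from a (choice of) reduced word;
it is independent of this choice. -/
def dem (n : ℕ) (w : Equiv.Perm (Fin n)) : R n → R n :=
  if h : ∃ l, IsReducedWord n w l then demWord n h.choose else id

/-- The longest element `w_0` of `S_n`. -/
def w₀ (n : ℕ) : Equiv.Perm (Fin n) := Fin.revPerm

/-- The staircase monomial `x_1^{n-1} x_2^{n-2} ⋯ x_{n-1}`. -/
def staircase (n : ℕ) : R n := ∏ i : Fin n, X i ^ (n - 1 - (i : ℕ))

/-- The Schubert polynomial `𝔖_w(x) = ∂_{w⁻¹ w₀}(x_1^{n-1} ⋯ x_{n-1})`. -/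
def schubert (n : ℕ) (w : Equiv.Perm (Fin n)) : R n := dem n (w⁻¹ * w₀ n) (staircase n)



open TensorProduct

/-- The subalgebra `R^{S_n} ⊆ R` of symmetric polynomials. -/
abbrev Ssub (n : ℕ) := MvPolynomial.symmetricSubalgebra (Fin n) ℂ

/-- The tensor product `R ⊗_{R^{S_n}} R`. -/
abbrev T (n : ℕ) := TensorProduct (Ssub n) (R n) (R n)

/-- `rename w` as an `R^{S_n}`-algebra endomorphism of `R`. -/
def renameS (n : ℕ) (w : Equiv.Perm (Fin n)) : R n →ₐ[Ssub n] R n :=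
  { (rename ⇑w : R n →ₐ[ℂ] R n) with
    commutes' := fun s => s.2 w }

/-- `F_w : R ⊗_{R^{S_n}} R → R_w`, the `R`-bimodule homomorphism `f ⊗ g ↦ f · (w·g)`
(the target `R_w` has underlying abelian group `R`). -/
def Fw (n : ℕ) (w : Equiv.Perm (Fin n)) : T n →ₐ[Ssub n] R n :=
  Algebra.TensorProduct.productMap (AlgHom.id (Ssub n) (R n)) (renameS n w)

open Classical in
/-- `S_w = 1 ⊗ 𝔖_w(x) + Σ 𝔖_v(-x) ⊗ 𝔖_u(x)`, the sum over all factorizations `w = v⁻¹ u`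
with `ℓ(u) < ℓ(w)` and `ℓ(w) = ℓ(v) + ℓ(u)`. -/
def Sw (n : ℕ) (w : Equiv.Perm (Fin n)) : T n :=
  (1 : R n) ⊗ₜ[Ssub n] schubert n w +
  ∑ p ∈ Finset.univ.filter
      (fun p : Equiv.Perm (Fin n) × Equiv.Perm (Fin n) =>
        w = p.2⁻¹ * p.1 ∧ len n p.1 < len n w ∧ len n w = len n p.2 + len n p.1),
    (aeval (fun i => -(X i : R n)) (schubert n p.2)) ⊗ₜ[Ssub n] schubert n p.1



namespace Pf

variable {n : ℕ}

/-- Lower index. -/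
def ia (i : ℕ) (hi : i + 1 < n) : Fin n := ⟨i, Nat.lt_of_succ_lt hi⟩
/-- Upper index. -/
def ib (i : ℕ) (hi : i + 1 < n) : Fin n := ⟨i + 1, hi⟩

lemma sr_def (i : ℕ) (hi : i + 1 < n) : simpleRefl n i = Equiv.swap (ia i hi) (ib i hi) := by
  simp [simpleRefl, hi, ia, ib]

lemma sr_mul_self (i : ℕ) : simpleRefl n i * simpleRefl n i = 1 := by
  by_cases hi : i + 1 < n
  · rw [sr_def i hi]; simp
  · simp [simpleRefl, hi]

lemma sr_inv (i : ℕ) : (simpleRefl n i)⁻¹ = simpleRefl n i :=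
  inv_eq_of_mul_eq_one_left (sr_mul_self i)

lemma mul_sr_sr (w : Equiv.Perm (Fin n)) (i : ℕ) : w * simpleRefl n i * simpleRefl n i = w := by
  rw [mul_assoc, sr_mul_self, mul_one]

lemma sr_sr_mul (w : Equiv.Perm (Fin n)) (i : ℕ) : simpleRefl n i * (simpleRefl n i * w) = w := by
  rw [← mul_assoc, sr_mul_self, one_mul]

lemma sr_a (i : ℕ) (hi : i + 1 < n) : simpleRefl n i (ia i hi) = ib i hi := by
  rw [sr_def i hi]; simp
lemma sr_b (i : ℕ) (hi : i + 1 < n) : simpleRefl n i (ib i hi) = ia i hi := by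
  rw [sr_def i hi]; simp
lemma sr_ne (i : ℕ) (hi : i + 1 < n) (k : Fin n) (h1 : (k : ℕ) ≠ i) (h2 : (k : ℕ) ≠ i + 1) :
    simpleRefl n i k = k := by
  rw [sr_def i hi]
  apply Equiv.swap_apply_of_ne_of_ne
  · intro h; apply h1; rw [h]; rfl
  · intro h; apply h2; rw [h]; rfl

lemma sr_val (i : ℕ) (hi : i + 1 < n) (k : Fin n) :
    ((simpleRefl n i k : Fin n) : ℕ) = if (k : ℕ) = i then i + 1 else if (k : ℕ) = i + 1 then i else k := by
  split_ifs with h1 h2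
  · have : k = ia i hi := Fin.ext h1
    rw [this, sr_a]; rfl
  · have : k = ib i hi := Fin.ext h2
    rw [this, sr_b]; rfl
  · rw [sr_ne i hi k h1 h2]

lemma mem_invSet (w : Equiv.Perm (Fin n)) (p q : Fin n) :
    (p, q) ∈ invSet n w ↔ p < q ∧ w q < w p := by
  simp [invSet]

lemma len_mul_sr_up (w : Equiv.Perm (Fin n)) (i : ℕ) (hi : i + 1 < n)
    (h : w (ia i hi) < w (ib i hi)) : len n (w * simpleRefl n i) = len n w + 1 := by
  have key : invSet n (w * simpleRefl n i) = insert (ia i hi, ib i hi)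
      ((invSet n w).map (Equiv.prodCongr (simpleRefl n i) (simpleRefl n i)).toEmbedding) := by
    ext ⟨p, q⟩
    rw [Finset.mem_insert, Finset.mem_map_equiv]
    simp only [mem_invSet, Equiv.Perm.mul_apply,
      Equiv.prodCongr_symm, Equiv.prodCongr_apply, Prod.map, Prod.mk.injEq]
    have e : ∀ k, (Equiv.symm (simpleRefl n i)) k = simpleRefl n i k := fun k => by
      change (simpleRefl n i)⁻¹ k = _
      rw [sr_inv]
    rw [e, e]
    by_cases hpa : p = ia i hi
    · subst hpa
      by_cases hqb : q = ib i hi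
      · subst hqb
        rw [sr_a, sr_b]
        simp only [and_self, true_or, iff_true]
        exact ⟨by simp [Fin.lt_def, ia, ib], h⟩
      · simp only [hqb, and_false, false_or]
        apply and_congr_left
        intro _
        rw [Fin.lt_def, Fin.lt_def, sr_val i hi, sr_val i hi]
        have : (q : ℕ) ≠ i + 1 := fun h => hqb (Fin.ext h)
        have : ((ia i hi : Fin n) : ℕ) = i := rfl
        split_ifs <;> omega
    · simp only [hpa, false_and, false_or]
      have hpa' : (p : ℕ) ≠ i := fun h => hpa (Fin.ext h)
      by_cases hc : p = ib i hi ∧ q = ia i hi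
      · obtain ⟨rfl, rfl⟩ := hc
        rw [sr_a, sr_b]
        constructor
        · rintro ⟨h1, -⟩
          simp [Fin.lt_def, ia, ib] at h1
        · rintro ⟨-, h1⟩
          exact absurd h1 (lt_asymm h)
      · apply and_congr_left
        intro _
        rw [Fin.lt_def, Fin.lt_def, sr_val i hi, sr_val i hi]
        have : ¬ ((p : ℕ) = i + 1 ∧ (q : ℕ) = i) := fun h => hc ⟨Fin.ext h.1, Fin.ext h.2⟩
        split_ifs <;> omega
  have hn : (ia i hi, ib i hi) ∉
      ((invSet n w).map (Equiv.prodCongr (simpleRefl n i) (simpleRefl n i)).toEmbedding) := by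
    rw [Finset.mem_map_equiv]
    simp only [mem_invSet, 
      Equiv.prodCongr_symm, Equiv.prodCongr_apply, Prod.map]
    have e : ∀ k, (Equiv.symm (simpleRefl n i)) k = simpleRefl n i k := fun k => by
      change (simpleRefl n i)⁻¹ k = _
      rw [sr_inv]
    rw [e, e, sr_a, sr_b]
    rintro ⟨h1, -⟩
    simp [Fin.lt_def, ia, ib] at h1
  rw [len, key, Finset.card_insert_of_notMem hn, Finset.card_map, len]

lemma len_mul_sr_down (w : Equiv.Perm (Fin n)) (i : ℕ) (hi : i + 1 < n)
    (h : w (ib i hi) < w (ia i hi)) : len n (w * simpleRefl n i) + 1 = len n w := by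
  have := len_mul_sr_up (w * simpleRefl n i) i hi (by simpa [sr_a, sr_b] using h)
  rw [mul_sr_sr] at this
  exact this.symm

lemma ia_ne_ib (i : ℕ) (hi : i + 1 < n) : ia i hi ≠ ib i hi := by
  simp [ia, ib, Fin.ext_iff]

lemma len_mul_sr (w : Equiv.Perm (Fin n)) (i : ℕ) (hi : i + 1 < n) :
    len n (w * simpleRefl n i) = len n w + 1 ∨ len n (w * simpleRefl n i) + 1 = len n w := by
  rcases lt_trichotomy (w (ia i hi)) (w (ib i hi)) with h | h | h
  · exact Or.inl (len_mul_sr_up w i hi h)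
  · exact absurd (w.injective h) (ia_ne_ib i hi)
  · exact Or.inr (len_mul_sr_down w i hi h)

lemma len_inv (w : Equiv.Perm (Fin n)) : len n w⁻¹ = len n w := by
  unfold len
  apply Finset.card_bij' (fun p _ => (w⁻¹ p.2, w⁻¹ p.1)) (fun p _ => (w p.2, w p.1))
  · rintro ⟨p, q⟩ h
    simp [invSet] at h ⊢
    exact h.symm
  · rintro ⟨p, q⟩ h
    simp [invSet] at h ⊢
    exact h.symm
  · rintro ⟨p, q⟩ h
    simp
  · rintro ⟨p, q⟩ h
    simp

lemma len_sr_mul_eq (w : Equiv.Perm (Fin n)) (i : ℕ) :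
    len n (simpleRefl n i * w) = len n (w⁻¹ * simpleRefl n i) := by
  rw [← len_inv, mul_inv_rev, sr_inv]

lemma len_sr_mul (w : Equiv.Perm (Fin n)) (i : ℕ) (hi : i + 1 < n) :
    len n (simpleRefl n i * w) = len n w + 1 ∨ len n (simpleRefl n i * w) + 1 = len n w := by
  rw [len_sr_mul_eq, ← len_inv w]
  exact len_mul_sr _ i hi

lemma len_one : len n 1 = 0 := by
  simp only [len, invSet, Finset.card_eq_zero, Finset.filter_eq_empty_iff]
  rintro ⟨p, q⟩ - ⟨h1, h2⟩
  exact lt_asymm h1 h2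

lemma exists_right_descent (w : Equiv.Perm (Fin n)) (hw : w ≠ 1) :
    ∃ i, i + 1 < n ∧ len n (w * simpleRefl n i) + 1 = len n w := by
  by_contra hcon
  push Not at hcon
  apply hw
  have hm : ∀ i (hi : i + 1 < n), w (ia i hi) < w (ib i hi) := by
    intro i hi
    rcases lt_trichotomy (w (ia i hi)) (w (ib i hi)) with h | h | h
    · exact h
    · exact absurd (w.injective h) (ia_ne_ib i hi)
    · exact absurd (len_mul_sr_down w i hi h) (hcon i hi)
  rcases n with _ | m
  · exact Subsingleton.elim _ _
  have hs : StrictMono w := by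
    rw [Fin.strictMono_iff_lt_succ]
    intro i
    exact hm i (by omega)
  ext i
  have := StrictMono.range_inj hs (strictMono_id (α := Fin (m + 1)))
  have h2 := this.1 (by simp)
  rw [h2]; rfl

lemma exists_left_descent (w : Equiv.Perm (Fin n)) (hw : w ≠ 1) :
    ∃ i, i + 1 < n ∧ len n (simpleRefl n i * w) + 1 = len n w := by
  obtain ⟨i, hi, h⟩ := exists_right_descent w⁻¹ (by simpa using hw)
  refine ⟨i, hi, ?_⟩
  rw [len_sr_mul_eq, h, len_inv]

lemma sr_out (i : ℕ) (hi : ¬ i + 1 < n) : simpleRefl n i = 1 := by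
  simp [simpleRefl, hi]

lemma exists_word (w : Equiv.Perm (Fin n)) : ∃ l, IsReducedWord n w l := by
  induction h : len n w using Nat.strong_induction_on generalizing w with
  | _ k ih =>
    by_cases hw : w = 1
    · subst hw
      exact ⟨[], by simp [IsReducedWord, len_one]⟩
    · obtain ⟨i, hi, hl⟩ := exists_left_descent w hw
      obtain ⟨l, h1, h2⟩ := ih (len n (simpleRefl n i * w)) (by omega) _ rfl
      refine ⟨i :: l, ?_, ?_⟩
      · simp [h1, sr_sr_mul]
      · simp [h2, hl]

lemma eq_one_of_len (w : Equiv.Perm (Fin n)) (h : len n w = 0) : w = 1 := by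
  by_contra hw
  obtain ⟨i, hi, hl⟩ := exists_left_descent w hw
  omega

lemma len_prod_mul_le (l : List ℕ) (w : Equiv.Perm (Fin n)) :
    len n ((l.map (simpleRefl n)).prod * w) ≤ l.length + len n w := by
  induction l with
  | nil => simp
  | cons i l ih =>
    simp only [List.map_cons, List.prod_cons, List.length_cons, mul_assoc]
    by_cases hi : i + 1 < n
    · rcases len_sr_mul ((l.map (simpleRefl n)).prod * w) i hi with h | h <;> omega
    · rw [sr_out i hi, one_mul]; omega

lemma len_prod_le (l : List ℕ) :
    len n (l.map (simpleRefl n)).prod ≤ l.length := by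
  have := len_prod_mul_le l (1 : Equiv.Perm (Fin n))
  rw [mul_one, len_one] at this
  exact this

lemma len_mul_le (u w : Equiv.Perm (Fin n)) : len n (u * w) ≤ len n u + len n w := by
  obtain ⟨l, h1, h2⟩ := exists_word u
  rw [← h2, ← h1]
  exact len_prod_mul_le l w

lemma reduced_cons {w : Equiv.Perm (Fin n)} {i : ℕ} {l : List ℕ} (h : IsReducedWord n w (i :: l)) :
    i + 1 < n ∧ len n (simpleRefl n i * w) + 1 = len n w ∧
      IsReducedWord n (simpleRefl n i * w) l := by
  obtain ⟨h1, h2⟩ := h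
  simp only [List.map_cons, List.prod_cons, List.length_cons] at h1 h2
  have h3 : (l.map (simpleRefl n)).prod = simpleRefl n i * w := by
    rw [← h1, sr_sr_mul]
  have h4 := len_prod_le (n := n) l
  rw [h3] at h4
  have hi : i + 1 < n := by
    by_contra hi
    rw [sr_out i hi, one_mul] at h4
    omega
  have := len_sr_mul w i hi
  exact ⟨hi, by omega, h3, by omega⟩

lemma reduced_cons' {w : Equiv.Perm (Fin n)} {i : ℕ} {l : List ℕ} 
    (h1 : len n (simpleRefl n i * w) + 1 = len n w) (h : IsReducedWord n (simpleRefl n i * w) l) :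
    IsReducedWord n w (i :: l) := by
  refine ⟨?_, ?_⟩
  · simp [h.1, sr_sr_mul]
  · simp [h.2, h1]

lemma left_descent_iff (w : Equiv.Perm (Fin n)) (i : ℕ) (hi : i + 1 < n) :
    len n (simpleRefl n i * w) + 1 = len n w ↔ w⁻¹ (ib i hi) < w⁻¹ (ia i hi) := by
  rw [len_sr_mul_eq, ← len_inv w]
  constructor
  · intro h
    rcases lt_trichotomy (w⁻¹ (ia i hi)) (w⁻¹ (ib i hi)) with h' | h' | h'
    · have := len_mul_sr_up _ i hi h'; omega
    · exact absurd (w⁻¹.injective h') (ia_ne_ib i hi)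
    · exact h'
  · exact len_mul_sr_down _ i hi

lemma w0_inv : (w₀ n)⁻¹ = w₀ n := by
  ext i; rfl

lemma len_mul_w0 (w : Equiv.Perm (Fin n)) : len n (w * w₀ n) + len n w = n.choose 2 := by
  have h1 : len n (w * w₀ n) = (Finset.univ.filter fun p : Fin n × Fin n => p.1 < p.2 ∧ w p.1 < w p.2).card := by
    unfold len
    refine Finset.card_bij' (fun p _ => (p.2.rev, p.1.rev)) (fun p _ => (p.2.rev, p.1.rev))
      ?_ ?_ ?_ ?_
    · rintro ⟨p, q⟩ h
      rw [mem_invSet] at h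
      simpa [w₀] using h
    · rintro ⟨p, q⟩ h
      rw [mem_invSet]
      simpa [w₀] using h
    · simp
    · simp
  have h2 : (Finset.univ.filter fun p : Fin n × Fin n => p.1 < p.2).card = n.choose 2 := by
    rw [Finset.card_filter, Fintype.sum_prod_type_right]
    have : ∀ y : Fin n, (∑ x : Fin n, if x < y then 1 else 0) = (y : ℕ) := by
      intro y
      rw [← Finset.card_filter, ← Fin.card_Iio y]
      congr 1
      ext x
      rw [Finset.mem_filter, Finset.mem_Iio]
      exact and_iff_right (Finset.mem_univ x)
    rw [Finset.sum_congr rfl (fun y _ => this y)]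
    rw [Fin.sum_univ_eq_sum_range (fun i => i), Finset.sum_range_id, Nat.choose_two_right]
  rw [h1, ← h2, len, invSet, ← Finset.card_union_of_disjoint]
  · congr 1
    ext ⟨p, q⟩
    simp only [Finset.mem_union, Finset.mem_filter, Finset.mem_univ, true_and, ← and_or_left]
    constructor
    · exact fun h => h.1
    · intro h
      refine ⟨h, ?_⟩
      exact lt_or_gt_of_ne (fun e => h.ne (w.injective e))
  · rw [Finset.disjoint_left]
    rintro ⟨p, q⟩ h1 h2
    simp at h1 h2
    exact lt_asymm h1.2 h2.2

lemma eq_w0_of_len (w : Equiv.Perm (Fin n)) (h : len n w = n.choose 2) : w = w₀ n := by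
  have h1 := len_mul_w0 w
  have h2 := eq_one_of_len (w * w₀ n) (by omega)
  rw [mul_eq_one_iff_eq_inv, w0_inv] at h2
  exact h2

lemma len_le (w : Equiv.Perm (Fin n)) : len n w ≤ n.choose 2 := by
  have := len_mul_w0 w
  omega

end Pf

namespace Pf

variable {n : ℕ}

/-- action of a simple reflection on polynomials -/
def rh (n i : ℕ) : R n →ₐ[ℂ] R n := rename (simpleRefl n i)

/-- simple root -/
def al (i : ℕ) (hi : i + 1 < n) : R n := X (ia i hi) - X (ib i hi)

lemma rh_X (i : ℕ) (k : Fin n) : rh n i (X k) = X (simpleRefl n i k) := by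
  simp [rh]

lemma rh_rh (i : ℕ) (f : R n) : rh n i (rh n i f) = f := by
  unfold rh
  rw [rename_rename, ← Equiv.Perm.coe_mul, sr_mul_self]
  simp

lemma al_ne (i : ℕ) (hi : i + 1 < n) : al i hi ≠ 0 := by
  unfold al
  rw [sub_ne_zero]
  intro h
  exact ia_ne_ib i hi (X_injective h)

lemma rh_al (i : ℕ) (hi : i + 1 < n) : rh n i (al i hi) = - al i hi := by
  simp [al, rh_X, sr_a, sr_b]

lemma al_dvd (i : ℕ) (hi : i + 1 < n) (f : R n) : al i hi ∣ f - rh n i f := by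
  induction f using MvPolynomial.induction_on with
  | C a => simp [rh]
  | add p q hp hq =>
    have : p + q - rh n i (p + q) = (p - rh n i p) + (q - rh n i q) := by rw [map_add]; ring
    rw [this]; exact dvd_add hp hq
  | mul_X p k hp =>
    have : p * X k - rh n i (p * X k) = (p - rh n i p) * X k + rh n i p * (X k - rh n i (X k)) := by
      rw [map_mul]; ring
    rw [this]
    refine dvd_add (Dvd.dvd.mul_right hp _) (Dvd.dvd.mul_left ?_ _)
    rw [rh_X]
    by_cases h1 : k = ia i hi
    · subst h1; rw [sr_a]; exact dvd_refl _
    by_cases h2 : k = ib i hi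
    · subst h2; rw [sr_b]; exact ⟨-1, by unfold al; ring⟩
    rw [sr_ne i hi k (fun h => h1 (Fin.ext h)) (fun h => h2 (Fin.ext h))]
    simp

lemma dem_spec (i : ℕ) (hi : i + 1 < n) (f : R n) : al i hi * demX n i f = f - rh n i f := by
  have hd := al_dvd i hi f
  unfold rh at hd ⊢
  rw [sr_def i hi] at hd ⊢
  unfold al ia ib at *
  rw [demX, dif_pos hi]
  simp only
  rw [dif_pos hd]
  exact hd.choose_spec.symm

lemma dem_out (i : ℕ) (hi : ¬ i + 1 < n) (f : R n) : demX n i f = 0 := by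
  rw [demX, dif_neg hi]

lemma dem_uniq (i : ℕ) (hi : i + 1 < n) {f g : R n} (h : al i hi * g = f - rh n i f) :
    demX n i f = g :=
  mul_left_cancel₀ (al_ne i hi) ((dem_spec i hi f).trans h.symm)

lemma dem_add (i : ℕ) (f g : R n) : demX n i (f + g) = demX n i f + demX n i g := by
  by_cases hi : i + 1 < n
  · apply dem_uniq i hi
    rw [mul_add, dem_spec, dem_spec, map_add]; ring
  · simp [dem_out i hi]

lemma dem_mul_inv (i : ℕ) (c f : R n) (hc : rh n i c = c) :
    demX n i (c * f) = c * demX n i f := by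
  by_cases hi : i + 1 < n
  · apply dem_uniq i hi
    rw [mul_left_comm, dem_spec, map_mul, hc]; ring
  · simp [dem_out i hi]

lemma dem_zero (i : ℕ) : demX n i 0 = 0 := by
  have := dem_mul_inv (n := n) i 0 0 (by simp)
  simpa using this

lemma dem_eq_zero_iff (i : ℕ) (hi : i + 1 < n) (f : R n) : demX n i f = 0 ↔ rh n i f = f := by
  have := dem_spec i hi f
  constructor
  · intro h
    rw [h, mul_zero] at this
    exact (sub_eq_zero.1 this.symm).symm
  · intro h
    apply dem_uniq i hi
    rw [h]; simp

lemma rh_dem (i : ℕ) (f : R n) : rh n i (demX n i f) = demX n i f := by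
  by_cases hi : i + 1 < n
  · apply mul_left_cancel₀ (al_ne i hi)
    have h := congrArg (rh n i) (dem_spec i hi f)
    rw [map_mul, rh_al, map_sub, rh_rh] at h
    rw [dem_spec]
    linear_combination -h
  · rw [dem_out i hi, map_zero]

lemma dem_dem (i : ℕ) (f : R n) : demX n i (demX n i f) = 0 := by
  by_cases hi : i + 1 < n
  · rw [dem_eq_zero_iff i hi, rh_dem]
  · rw [dem_out i hi]

lemma dem_comm (i j : ℕ) (hij : i + 1 < j) (hj : j + 1 < n) (h : R n) :
    demX n i (demX n j h) = demX n j (demX n i h) := by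
  have hi : i + 1 < n := by omega
  have hc : ∀ f, rh n i (rh n j f) = rh n j (rh n i f) := by
    intro f
    unfold rh
    rw [rename_rename, rename_rename, ← Equiv.Perm.coe_mul, ← Equiv.Perm.coe_mul]
    congr 2
    ext k
    simp only [Equiv.Perm.mul_apply, sr_val _ hi, sr_val _ hj]
    split_ifs <;> omega
  have e1 : rh n i (al j hj) = al j hj := by
    unfold al
    rw [map_sub, rh_X, rh_X, sr_ne i hi, sr_ne i hi] <;> simp [ia, ib] <;> omega
  have e2 : rh n j (al i hi) = al i hi := by
    unfold al
    rw [map_sub, rh_X, rh_X, sr_ne j hj, sr_ne j hj] <;> simp [ia, ib] <;> omega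
  apply mul_left_cancel₀ (mul_ne_zero (al_ne i hi) (al_ne j hj))
  have a1 := dem_spec i hi (demX n j h)
  have a2 := dem_spec j hj h
  have a3 := congrArg (rh n i) a2
  have b1 := dem_spec j hj (demX n i h)
  have b2 := dem_spec i hi h
  have b3 := congrArg (rh n j) b2
  rw [map_mul, map_sub, e1, hc] at a3
  rw [map_mul, map_sub, e2] at b3
  linear_combination (al j hj) * a1 + a2 - a3 - (al i hi) * b1 - b2 + b3

lemma dem_braid (i : ℕ) (hj : i + 1 + 1 < n) (h : R n) :
    demX n i (demX n (i + 1) (demX n i h)) = demX n (i + 1) (demX n i (demX n (i + 1) h)) := by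
  have hi : i + 1 < n := by omega
  have hc : ∀ f, rh n i (rh n (i + 1) (rh n i f)) = rh n (i + 1) (rh n i (rh n (i + 1) f)) := by
    intro f
    unfold rh
    simp only [rename_rename, ← Equiv.Perm.coe_mul]
    congr 2
    ext k
    simp only [Equiv.Perm.mul_apply, sr_val _ hi, sr_val _ hj]
    split_ifs <;> omega
  obtain ⟨a, ha⟩ : ∃ a : R n, a = X (ia i hi) := ⟨_, rfl⟩
  obtain ⟨b, hb⟩ : ∃ a : R n, a = X (ib i hi) := ⟨_, rfl⟩
  obtain ⟨c, hcc⟩ : ∃ a : R n, a = X (ib (i + 1) hj) := ⟨_, rfl⟩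
  have hab : al i hi = a - b := by rw [ha, hb]; rfl
  have hbc : al (i + 1) hj = b - c := by rw [hb, hcc]; rfl
  have sa : rh n i a = b := by rw [ha, hb, rh_X, sr_a]
  have sb : rh n i b = a := by rw [ha, hb, rh_X, sr_b]
  have sc : rh n i c = c := by
    rw [hcc, rh_X, sr_ne i hi] <;> simp [ib] <;> omega
  have ta : rh n (i + 1) a = a := by
    rw [ha, rh_X, sr_ne (i + 1) hj] <;> simp [ia] <;> omega
  have tb : rh n (i + 1) b = c := by
    rw [hb, hcc, rh_X]
    congr 1
    exact sr_a (i + 1) hj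
  have tc : rh n (i + 1) c = b := by
    rw [hb, hcc, rh_X]
    congr 1
    exact sr_b (i + 1) hj
  have hac : a - c ≠ 0 := by
    rw [ha, hcc, sub_ne_zero]
    intro h
    have := X_injective h
    simp [ia, ib] at this
    omega
  have hne : (a - b) * (b - c) * (a - c) ≠ 0 :=
    mul_ne_zero (mul_ne_zero (hab ▸ al_ne i hi) (hbc ▸ al_ne (i + 1) hj)) hac
  apply mul_left_cancel₀ hne
  have A : (a - b) * (b - c) * (a - c) * demX n i (demX n (i + 1) (demX n i h)) =
      h - rh n i h - rh n (i + 1) h + rh n i (rh n (i + 1) h) + rh n (i + 1) (rh n i h)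
        - rh n i (rh n (i + 1) (rh n i h)) := by
    have E1 := dem_spec i hi h
    have inv := rh_dem (n := n) i h
    generalize demX n i h = m at *
    have E2 := dem_spec (i + 1) hj m
    generalize demX n (i + 1) m = k at *
    have E3 := dem_spec i hi k
    generalize demX n i k = L at *
    rw [hab] at E1 E3
    rw [hbc] at E2
    have E1t := congrArg (rh n (i + 1)) E1
    have E1st := congrArg (rh n i) E1t
    have E2s := congrArg (rh n i) E2
    simp only [map_mul, map_sub, sa, sb, sc, ta, tb, tc, inv] at E1t E1st E2s
    linear_combination (b - c) * (a - c) * E3 + (a - c) * E2 - (b - c) * E2s + E1 - E1t + E1st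
  have B : (a - b) * (b - c) * (a - c) * demX n (i + 1) (demX n i (demX n (i + 1) h)) =
      h - rh n i h - rh n (i + 1) h + rh n i (rh n (i + 1) h) + rh n (i + 1) (rh n i h)
        - rh n (i + 1) (rh n i (rh n (i + 1) h)) := by
    have E1 := dem_spec (i + 1) hj h
    have inv := rh_dem (n := n) (i + 1) h
    generalize demX n (i + 1) h = m at *
    have E2 := dem_spec i hi m
    generalize demX n i m = k at *
    have E3 := dem_spec (i + 1) hj k
    generalize demX n (i + 1) k = L at *
    rw [hbc] at E1 E3
    rw [hab] at E2
    have E1s := congrArg (rh n i) E1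
    have E1ts := congrArg (rh n (i + 1)) E1s
    have E2t := congrArg (rh n (i + 1)) E2
    simp only [map_mul, map_sub, sa, sb, sc, ta, tb, tc, inv] at E1s E1ts E2t
    linear_combination (a - b) * (a - c) * E3 + (a - c) * E2 - (a - b) * E2t + E1 - E1s + E1ts
  rw [A, B, hc]

lemma desc_comm {w : Equiv.Perm (Fin n)} {i j : ℕ} (hij : i + 1 < j ∨ j + 1 < i)
    (hi : i + 1 < n) (hj : j + 1 < n)
    (h2 : len n (simpleRefl n j * w) + 1 = len n w) :
    len n (simpleRefl n j * (simpleRefl n i * w)) + 1 = len n (simpleRefl n i * w) := by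
  rw [left_descent_iff _ j hj] at h2 ⊢
  rw [mul_inv_rev, sr_inv, Equiv.Perm.mul_apply, Equiv.Perm.mul_apply, sr_ne i hi, sr_ne i hi]
  · exact h2
  all_goals simp only [ia, ib]; omega

lemma sr_comm {i j : ℕ} (hij : i + 1 < j ∨ j + 1 < i) (hi : i + 1 < n) (hj : j + 1 < n) :
    simpleRefl n i * simpleRefl n j = simpleRefl n j * simpleRefl n i := by
  ext k
  simp only [Equiv.Perm.mul_apply, sr_val _ hi, sr_val _ hj]
  split_ifs <;> omega

lemma sr_braid (i : ℕ) (hj : i + 1 + 1 < n) :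
    simpleRefl n i * (simpleRefl n (i + 1) * simpleRefl n i) =
      simpleRefl n (i + 1) * (simpleRefl n i * simpleRefl n (i + 1)) := by
  have hi : i + 1 < n := by omega
  ext k
  simp only [Equiv.Perm.mul_apply, sr_val _ hi, sr_val _ hj]
  split_ifs <;> omega

lemma desc_braid {w : Equiv.Perm (Fin n)} {i : ℕ} (hj : i + 1 + 1 < n) (hi : i + 1 < n)
    (h1 : len n (simpleRefl n i * w) + 1 = len n w)
    (h2 : len n (simpleRefl n (i + 1) * w) + 1 = len n w) :
    len n (simpleRefl n (i + 1) * (simpleRefl n i * w)) + 1 = len n (simpleRefl n i * w) ∧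
    len n (simpleRefl n i * (simpleRefl n (i + 1) * (simpleRefl n i * w))) + 1 =
      len n (simpleRefl n (i + 1) * (simpleRefl n i * w)) ∧
    len n (simpleRefl n i * (simpleRefl n (i + 1) * w)) + 1 = len n (simpleRefl n (i + 1) * w) ∧
    len n (simpleRefl n (i + 1) * (simpleRefl n i * (simpleRefl n (i + 1) * w))) + 1 =
      len n (simpleRefl n i * (simpleRefl n (i + 1) * w)) := by
  rw [left_descent_iff _ i hi] at h1
  rw [left_descent_iff _ (i + 1) hj] at h2
  rw [left_descent_iff _ i hi, left_descent_iff _ i hi, left_descent_iff _ (i + 1) hj,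
    left_descent_iff _ (i + 1) hj]
  have e : ia (i + 1) hj = ib i hi := rfl
  have sc : simpleRefl n i (ib (i + 1) hj) = ib (i + 1) hj := by
    rw [sr_ne i hi] <;> simp [ib] <;> omega
  have ta : simpleRefl n (i + 1) (ia i hi) = ia i hi := by
    rw [sr_ne (i + 1) hj] <;> simp [ia] <;> omega
  have tb : simpleRefl n (i + 1) (ib i hi) = ib (i + 1) hj := sr_a (i + 1) hj
  rw [e] at h2
  simp only [mul_inv_rev, sr_inv, Equiv.Perm.mul_apply, e, sc, ta, tb, sr_a i hi, sr_b i hi,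
    sr_b (i + 1) hj]
  exact ⟨h2.trans h1, h2, h2.trans h1, h1⟩

lemma demWord_unique (k : ℕ) : ∀ (w : Equiv.Perm (Fin n)) (l m : List ℕ), len n w = k →
    IsReducedWord n w l → IsReducedWord n w m → ∀ f, demWord n l f = demWord n m f := by
  induction k using Nat.strong_induction_on with
  | _ k ih =>
    intro w l m hk hl hm f
    rcases l with _ | ⟨i, l⟩
    · have := hl.2
      have h2 := hm.2
      simp at this
      rw [← this] at h2
      rw [List.length_eq_zero_iff.1 h2]
    rcases m with _ | ⟨j, m⟩
    · have := hm.2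
      have h2 := hl.2
      simp at this
      rw [← this] at h2
      simp at h2
    obtain ⟨hi, hli, rl⟩ := reduced_cons hl
    obtain ⟨hj, hlj, rm⟩ := reduced_cons hm
    change demX n i (demWord n l f) = demX n j (demWord n m f)
    have comm_case : ∀ (i j : ℕ) (l m : List ℕ), i + 1 < j → (hi : i + 1 < n) → (hj : j + 1 < n) →
        len n (simpleRefl n i * w) + 1 = len n w → IsReducedWord n (simpleRefl n i * w) l →
        len n (simpleRefl n j * w) + 1 = len n w → IsReducedWord n (simpleRefl n j * w) m → 
        demX n i (demWord n l f) = demX n j (demWord n m f) := by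
      intro i j l m hij hi hj hli rl hlj rm
      obtain ⟨r, hr⟩ := exists_word (simpleRefl n j * (simpleRefl n i * w))
      have d1 := desc_comm (Or.inl hij) hi hj hlj
      have d2 := desc_comm (Or.inr hij) hj hi hli
      have r1 := reduced_cons' d1 hr
      rw [← mul_assoc, ← sr_comm (Or.inl hij) hi hj, mul_assoc] at hr
      have r2 := reduced_cons' d2 hr
      rw [ih _ (by omega) _ _ _ rfl rl r1, ih _ (by omega) _ _ _ rfl rm r2]
      exact dem_comm i j hij hj _
    have braid_case : ∀ (i : ℕ) (l m : List ℕ), (hi : i + 1 < n) → (hj : i + 1 + 1 < n) →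
        len n (simpleRefl n i * w) + 1 = len n w → IsReducedWord n (simpleRefl n i * w) l →
        len n (simpleRefl n (i + 1) * w) + 1 = len n w →
        IsReducedWord n (simpleRefl n (i + 1) * w) m → 
        demX n i (demWord n l f) = demX n (i + 1) (demWord n m f) := by
      intro i l m hi hj hli rl hlj rm
      obtain ⟨r, hr⟩ := exists_word
        (simpleRefl n i * (simpleRefl n (i + 1) * (simpleRefl n i * w)))
      obtain ⟨d1, d2, d3, d4⟩ := desc_braid hj hi hli hlj
      have r1 := reduced_cons' d1 (reduced_cons' d2 hr)
      have e : simpleRefl n i * (simpleRefl n (i + 1) * (simpleRefl n i * w)) =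
          simpleRefl n (i + 1) * (simpleRefl n i * (simpleRefl n (i + 1) * w)) := by
        have := congrArg (· * w) (sr_braid i hj)
        simpa only [mul_assoc] using this
      rw [e] at hr
      have r2 := reduced_cons' d3 (reduced_cons' d4 hr)
      rw [ih _ (by omega) _ _ _ rfl rl r1, ih _ (by omega) _ _ _ rfl rm r2]
      exact dem_braid i hj _
    have tri : i = j ∨ i + 1 < j ∨ j + 1 < i ∨ j = i + 1 ∨ i = j + 1 := by omega
    rcases tri with rfl | h | h | rfl | rfl
    · rw [ih _ (by omega) _ _ _ rfl rl rm]
    · exact comm_case i j l m h hi hj hli rl hlj rm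
    · exact (comm_case j i m l h hj hi hlj rm hli rl).symm
    · exact braid_case i l m hi hj hli rl hlj rm
    · exact (braid_case j m l hj hi hlj rm hli rl).symm

lemma dem_eq_word {w : Equiv.Perm (Fin n)} {l : List ℕ} (h : IsReducedWord n w l) (f : R n) :
    dem n w f = demWord n l f := by
  have he : ∃ l, IsReducedWord n w l := ⟨l, h⟩
  rw [dem, dif_pos he]
  exact demWord_unique _ w _ _ rfl he.choose_spec h f

lemma dem_one (f : R n) : dem n 1 f = f := by
  rw [dem_eq_word (l := []) (by simp [IsReducedWord, len_one])]
  rfl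

lemma dem_sr_mul_up (w : Equiv.Perm (Fin n)) (i : ℕ)
    (h : len n (simpleRefl n i * w) = len n w + 1) (f : R n) :
    dem n (simpleRefl n i * w) f = demX n i (dem n w f) := by
  obtain ⟨l, hl⟩ := exists_word w
  rw [dem_eq_word hl, dem_eq_word (l := i :: l)]
  · rfl
  · apply reduced_cons'
    · rw [sr_sr_mul, h]
    · rwa [sr_sr_mul]

lemma dem_sr_mul_down (w : Equiv.Perm (Fin n)) (i : ℕ)
    (h : len n (simpleRefl n i * w) + 1 = len n w) (f : R n) :
    demX n i (dem n w f) = 0 := by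
  have := dem_sr_mul_up (simpleRefl n i * w) i (by rw [sr_sr_mul, h]) f
  rw [sr_sr_mul] at this
  rw [this, dem_dem]

lemma demWord_eq (l : List ℕ) (f : R n) :
    (IsReducedWord n (l.map (simpleRefl n)).prod l) ∨ demWord n l f = 0 := by
  induction l with
  | nil => left; simp [IsReducedWord, len_one]
  | cons i l ih =>
    change _ ∨ demX n i (demWord n l f) = 0
    by_cases hi : i + 1 < n
    swap
    · right; exact dem_out i hi _
    rcases ih with h | h
    · rcases len_sr_mul (l.map (simpleRefl n)).prod i hi with h2 | h2
      · left
        refine ⟨rfl, ?_⟩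
        simp only [List.map_cons, List.prod_cons, List.length_cons, h2]
        rw [h.2]
      · right
        rw [← dem_eq_word h, dem_sr_mul_down _ i h2]
    · right
      rw [h, dem_zero]

end Pf

namespace Pf

variable {n : ℕ}

lemma hom_cancel {d : ℕ} {p g : R n} (hp : p.IsHomogeneous 1) (hp0 : p ≠ 0)
    (h : (p * g).IsHomogeneous (d + 1)) : g.IsHomogeneous d := by
  have key : p * homogeneousComponent d g = p * g := by
    rw [← homogeneousComponent_eq_self h]
    have h1 : homogeneousComponent d g =
        ∑ i ∈ Finset.range (g.totalDegree + 1), homogeneousComponent d (homogeneousComponent i g) := by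
      rw [← map_sum, sum_homogeneousComponent]
    have h2 : homogeneousComponent (d + 1) (p * g) =
        ∑ i ∈ Finset.range (g.totalDegree + 1),
          homogeneousComponent (d + 1) (p * homogeneousComponent i g) := by
      rw [← map_sum, ← Finset.mul_sum, sum_homogeneousComponent]
    rw [h1, h2, Finset.mul_sum]
    apply Finset.sum_congr rfl
    intro i _
    rw [homogeneousComponent_of_mem (homogeneousComponent_isHomogeneous i g),
      homogeneousComponent_of_mem (hp.mul (homogeneousComponent_isHomogeneous i g))]
    by_cases hd : d = i
    · subst hd; simp [add_comm]
    · rw [if_neg hd, if_neg (by omega), mul_zero]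
  rw [← mul_left_cancel₀ hp0 key]
  exact homogeneousComponent_isHomogeneous d g

lemma al_hom (i : ℕ) (hi : i + 1 < n) : (al i hi).IsHomogeneous 1 :=
  (isHomogeneous_X _ _).sub (isHomogeneous_X _ _)

lemma demX_hom (i : ℕ) (d : ℕ) (f : R n) (hf : f.IsHomogeneous (d + 1)) :
    (demX n i f).IsHomogeneous d := by
  by_cases hi : i + 1 < n
  · apply hom_cancel (al_hom i hi) (al_ne i hi)
    rw [dem_spec]
    exact hf.sub hf.rename_isHomogeneous
  · rw [dem_out i hi]; exact isHomogeneous_zero _ _ _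

lemma demWord_hom (l : List ℕ) (d : ℕ) (f : R n) (hf : f.IsHomogeneous (d + l.length)) :
    (demWord n l f).IsHomogeneous d := by
  induction l generalizing d with
  | nil => exact hf
  | cons i l ih =>
    apply demX_hom
    apply ih
    rw [List.length_cons] at hf
    convert hf using 1
    ring

/-- degree bound -/
def Deg (f : R n) : Prop := ∀ k : Fin n, degreeOf k f ≤ n - 1 - k

lemma demX_deg (i : ℕ) (f : R n) (hf : Deg f) : Deg (demX n i f) := by
  intro k
  by_cases hi : i + 1 < n
  swap
  · rw [dem_out i hi, degreeOf_zero]; exact Nat.zero_le _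
  by_cases h0 : demX n i f = 0
  · rw [h0, degreeOf_zero]; exact Nat.zero_le _
  have h1 := degreeOf_mul_eq (n := k) (al_ne i hi) h0
  rw [dem_spec] at h1
  have h2 := degreeOf_sub_le k f (rh n i f)
  have h3 : degreeOf k (rh n i f) = degreeOf (simpleRefl n i k) f := by
    have := degreeOf_rename_of_injective (p := f) (simpleRefl n i).injective (simpleRefl n i k)
    rw [← Equiv.Perm.mul_apply, sr_mul_self] at this
    exact this
  have h4 := hf k
  have h5 := hf (simpleRefl n i k)
  rw [sr_val i hi] at h5
  have h6 : ((k : ℕ) = i ∨ (k : ℕ) = i + 1) → 1 ≤ degreeOf k (al i hi) := by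
    rintro (h | h)
    · have : k = ia i hi := Fin.ext h
      subst this
      have hm : (Finsupp.single (ia i hi) 1) ∈ (al i hi).support := by
        rw [mem_support_iff, al, coeff_sub, coeff_X, coeff_X, if_pos rfl, if_neg]
        · simp
        · intro h
          exact ia_ne_ib i hi (Finsupp.single_left_injective one_ne_zero h).symm
      simpa using monomial_le_degreeOf (ia i hi) hm
    · have : k = ib i hi := Fin.ext h
      subst this
      have hm : (Finsupp.single (ib i hi) 1) ∈ (al i hi).support := by
        rw [mem_support_iff, al, coeff_sub, coeff_X, coeff_X, if_pos rfl, if_neg]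
        · simp
        · intro h
          exact ia_ne_ib i hi (Finsupp.single_left_injective one_ne_zero h)
      simpa using monomial_le_degreeOf (ib i hi) hm
  rw [h3] at h2
  rcases max_le_iff.1 (le_refl (max (degreeOf k f) (degreeOf (simpleRefl n i k) f))) with ⟨g1, g2⟩
  rcases le_max_iff.1 h2 with h2 | h2
  · split_ifs at h5 with c1 c2
    · have := h6 (Or.inl c1); omega
    · have := h6 (Or.inr c2)
      omega
    · omega
  · split_ifs at h5 with c1 c2
    · have := h6 (Or.inl c1); omega
    · have := h6 (Or.inr c2); omega
    · omega

lemma demWord_deg (l : List ℕ) (f : R n) (hf : Deg f) : Deg (demWord n l f) := by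
  induction l with
  | nil => exact hf
  | cons i l ih => exact demX_deg i _ ih

lemma staircase_deg : Deg (staircase n) := by
  intro k
  refine (degreeOf_prod_le _ _ _).trans ?_
  rw [Finset.sum_eq_single k]
  · rw [degreeOf_X_self_pow]
  · intro b _ hb
    exact degreeOf_X_pow_of_ne _ hb.symm
  · simp

/-- intermediate monomials -/
def Mon (n m k : ℕ) : R n := ∏ i : Fin n, X i ^ ((m - (i : ℕ)) - if (i : ℕ) < k then 1 else 0)

lemma rh_prod (i : ℕ) (hi : i + 1 < n) (e : ℕ → ℕ) (he : e i = e (i + 1)) :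
    rh n i (∏ k : Fin n, X k ^ e k) = ∏ k : Fin n, X k ^ e k := by
  rw [map_prod, ← Equiv.prod_comp (simpleRefl n i)]
  apply Finset.prod_congr rfl
  intro k _
  rw [map_pow, rh_X, ← Equiv.Perm.mul_apply, sr_mul_self, Equiv.Perm.one_apply, sr_val i hi]
  split_ifs with h1 h2
  · rw [h1, he]
  · rw [h2, he]
  · rfl

lemma Mon_step (m k : ℕ) (hk : k < m) (hm : m ≤ n - 1) : demX n k (Mon n m k) = Mon n m (k + 1) := by
  have hi : k + 1 < n := by omega
  have h1 : Mon n m k = X (ia k hi) * Mon n m (k + 1) := by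
    have : (X (ia k hi) : R n) = ∏ i : Fin n, X i ^ (if i = ia k hi then 1 else 0) := by
      rw [Finset.prod_eq_single (ia k hi)]
      · simp
      · intro b _ hb; simp [hb]
      · simp
    rw [this, Mon, Mon, ← Finset.prod_mul_distrib]
    apply Finset.prod_congr rfl
    intro i _
    rw [← pow_add]
    congr 1
    have : i = ia k hi ↔ (i : ℕ) = k := by rw [Fin.ext_iff]; rfl
    simp only [this]
    split_ifs <;> omega
  have h2 : rh n k (Mon n m (k + 1)) = Mon n m (k + 1) := by
    apply rh_prod k hi (fun i => (m - i) - if i < k + 1 then 1 else 0)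
    split_ifs <;> omega
  rw [h1]
  apply dem_uniq k hi
  rw [map_mul, h2, rh_X, sr_a, al]
  ring

lemma demWord_snoc (l : List ℕ) (k : ℕ) (f : R n) :
    demWord n (l ++ [k]) f = demWord n l (demX n k f) := by
  simp [demWord]

lemma good_word (m : ℕ) (hm : m ≤ n - 1) :
    ∃ l : List ℕ, l.length = (m + 1).choose 2 ∧ demWord n l (Mon n m 0) = 1 := by
  induction m with
  | zero => exact ⟨[], by simp, by simp [demWord, Mon]⟩
  | succ m ih =>
    have inner : ∀ t ≤ m + 1, ∃ l : List ℕ, l.length = (m + 1).choose 2 + t ∧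
        demWord n l (Mon n (m + 1) (m + 1 - t)) = 1 := by
      intro t
      induction t with
      | zero =>
        intro _
        obtain ⟨l, h1, h2⟩ := ih (by omega)
        refine ⟨l, h1, ?_⟩
        rw [← h2]
        congr 1
        apply Finset.prod_congr rfl
        intro i _
        congr 1
        split_ifs <;> omega
      | succ t iht =>
        intro ht
        obtain ⟨l, h1, h2⟩ := iht (by omega)
        refine ⟨l ++ [m + 1 - (t + 1)], by simp [h1]; omega, ?_⟩
        rw [demWord_snoc, Mon_step _ _ (by omega) hm]
        convert h2 using 3
        omega
    obtain ⟨l, h1, h2⟩ := inner (m + 1) le_rfl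
    refine ⟨l, ?_, ?_⟩
    · rw [h1, Nat.choose_succ_succ' (m + 1) 1, Nat.choose_one_right]; ring
    · simpa using h2

lemma schubert_one : schubert n 1 = 1 := by
  obtain ⟨l, h1, h2⟩ := good_word (n := n) (n - 1) le_rfl
  have hs : Mon n (n - 1) 0 = staircase n := by
    simp [Mon, staircase]
  rw [hs] at h2
  have hc : (n - 1 + 1).choose 2 = n.choose 2 := by
    rcases n with _ | m
    · rfl
    · rfl
  rcases demWord_eq l (staircase n) with h | h
  · have : (l.map (simpleRefl n)).prod = w₀ n := by
      apply eq_w0_of_len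
      rw [← h.2, h1, hc]
    rw [this] at h
    rw [schubert, inv_one, one_mul, dem_eq_word h, h2]
  · rw [h2] at h
    exact absurd h one_ne_zero

lemma len_inv_w0 (w : Equiv.Perm (Fin n)) : len n (w⁻¹ * w₀ n) + len n w = n.choose 2 := by
  have := len_mul_w0 w⁻¹
  rwa [len_inv w] at this

lemma sr_inv_w0 (w : Equiv.Perm (Fin n)) (i : ℕ) :
    (w * simpleRefl n i)⁻¹ * w₀ n = simpleRefl n i * (w⁻¹ * w₀ n) := by
  rw [mul_inv_rev, sr_inv, mul_assoc]

lemma dem_schub_down (w : Equiv.Perm (Fin n)) (i : ℕ)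
    (h : len n (w * simpleRefl n i) + 1 = len n w) :
    demX n i (schubert n w) = schubert n (w * simpleRefl n i) := by
  rw [schubert, schubert, sr_inv_w0, dem_sr_mul_up]
  rw [← sr_inv_w0]
  have h1 := len_inv_w0 w
  have h2 := len_inv_w0 (w * simpleRefl n i)
  omega

lemma dem_schub_up (w : Equiv.Perm (Fin n)) (i : ℕ)
    (h : len n (w * simpleRefl n i) = len n w + 1) :
    demX n i (schubert n w) = 0 := by
  rw [schubert, dem_sr_mul_down]
  rw [← sr_inv_w0]
  have h1 := len_inv_w0 w
  have h2 := len_inv_w0 (w * simpleRefl n i)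
  omega

lemma staircase_hom : (staircase n).IsHomogeneous (n.choose 2) := by
  have h : (staircase n).IsHomogeneous (∑ i : Fin n, (n - 1 - (i : ℕ))) := by
    apply IsHomogeneous.prod
    intro i _
    exact isHomogeneous_X_pow _ _
  convert h using 1
  rw [Fin.sum_univ_eq_sum_range (fun i => n - 1 - i), Finset.sum_range_reflect (fun i => i),
    Finset.sum_range_id, Nat.choose_two_right]

lemma schub_hom (w : Equiv.Perm (Fin n)) : (schubert n w).IsHomogeneous (len n w) := by
  obtain ⟨l, hl⟩ := exists_word (w⁻¹ * w₀ n)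
  rw [schubert, dem_eq_word hl]
  apply demWord_hom
  rw [hl.2]
  convert staircase_hom using 1
  have := len_inv_w0 w
  omega

lemma schub_const (w : Equiv.Perm (Fin n)) (hw : w ≠ 1) : constantCoeff (schubert n w) = 0 := by
  rw [constantCoeff_eq]
  apply (schub_hom w).coeff_eq_zero
  intro h
  apply hw
  apply eq_one_of_len
  rw [← h]
  simp

lemma schub_deg (w : Equiv.Perm (Fin n)) : Deg (schubert n w) := by
  obtain ⟨l, hl⟩ := exists_word (w⁻¹ * w₀ n)
  rw [schubert, dem_eq_word hl]
  exact demWord_deg _ _ staircase_deg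

lemma dem_schub (w v : Equiv.Perm (Fin n)) :
    dem n v (schubert n w) =
      if len n (w * v⁻¹) + len n v = len n w then schubert n (w * v⁻¹) else 0 := by
  induction hk : len n v generalizing v with
  | zero =>
    rw [eq_one_of_len v hk]
    simp [dem_one]
  | succ k ih =>
    obtain ⟨i, hi, hd⟩ := exists_left_descent v (by rintro rfl; rw [len_one] at hk; omega)
    obtain ⟨u, rfl⟩ : ∃ u, v = simpleRefl n i * u := ⟨simpleRefl n i * v, by rw [sr_sr_mul]⟩
    rw [sr_sr_mul] at hd
    rw [dem_sr_mul_up u i hd.symm, ih u (by omega), mul_inv_rev, sr_inv, ← mul_assoc]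
    have h1 := len_mul_sr (w * u⁻¹) i hi
    have h2 := len_mul_le (w * u⁻¹) u
    rw [inv_mul_cancel_right] at h2
    by_cases hc : len n (w * u⁻¹) + k = len n w
    · rw [if_pos hc]
      rcases h1 with h1 | h1
      · rw [dem_schub_up _ _ h1, if_neg (by omega)]
      · rw [dem_schub_down _ _ h1, if_pos (by omega)]
    · rw [if_neg hc, dem_zero, if_neg (by omega)]

lemma dem_schub_ge (w v : Equiv.Perm (Fin n)) (h : len n w ≤ len n v) :
    dem n v (schubert n w) = if v = w then 1 else 0 := by
  rw [dem_schub]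
  by_cases hvw : v = w
  · subst hvw
    simp [len_one, schubert_one]
  · rw [if_neg hvw, if_neg]
    intro hc
    apply hvw
    have := eq_one_of_len (w * v⁻¹) (by omega)
    exact (mul_inv_eq_one.1 this).symm

lemma sym_of_rh (f : R n) (h : ∀ i, i + 1 < n → rh n i f = f) : f.IsSymmetric := by
  intro w
  obtain ⟨l, hl, -⟩ := exists_word w
  rw [← hl]
  clear hl
  induction l with
  | nil => simp
  | cons i l ih =>
    rw [List.map_cons, List.prod_cons, Equiv.Perm.coe_mul, ← rename_rename, ih]
    by_cases hi : i + 1 < n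
    · exact h i hi
    · rw [sr_out i hi]; simp

/-- Demazure operator as a linear map -/
def demXL (n i : ℕ) : R n →ₗ[Ssub n] R n where
  toFun := demX n i
  map_add' := dem_add i
  map_smul' := by
    intro c f
    rw [Algebra.smul_def, RingHom.id_apply, Algebra.smul_def]
    exact dem_mul_inv i _ _ (c.2 _)

lemma demWord_lin (l : List ℕ) : ∃ L : R n →ₗ[Ssub n] R n, ∀ f, L f = demWord n l f := by
  induction l with
  | nil => exact ⟨LinearMap.id, fun _ => rfl⟩
  | cons i l ih =>
    obtain ⟨L, hL⟩ := ih
    exact ⟨(demXL n i).comp L, fun f => by rw [LinearMap.comp_apply, hL]; rfl⟩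

lemma dem_lin (w : Equiv.Perm (Fin n)) : ∃ L : R n →ₗ[Ssub n] R n, ∀ f, L f = dem n w f := by
  obtain ⟨l, hl⟩ := exists_word w
  obtain ⟨L, hL⟩ := demWord_lin (n := n) l
  exact ⟨L, fun f => by rw [hL, dem_eq_word hl]⟩

lemma span_aux (m : ℕ) : ∀ f : R n, (∀ v, m ≤ len n v → dem n v f = 0) →
    f ∈ Submodule.span (Ssub n) (Set.range (schubert n)) := by
  induction m with
  | zero =>
    intro f h
    have := h 1 (Nat.zero_le _)
    rw [dem_one] at this
    rw [this]; exact Submodule.zero_mem _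
  | succ m ih =>
    intro f h
    have hsym : ∀ w, len n w = m → (dem n w f).IsSymmetric := by
      intro w hw
      apply sym_of_rh
      intro i hi
      rw [← dem_eq_zero_iff i hi]
      rcases len_sr_mul w i hi with h1 | h1
      · rw [← dem_sr_mul_up w i h1]
        exact h _ (by omega)
      · exact dem_sr_mul_down w i h1 f
    classical
    let c : Equiv.Perm (Fin n) → Ssub n := fun w => if hw : len n w = m then ⟨dem n w f, hsym w hw⟩ else 0
    have hc : ∀ w, len n w ≠ m → c w = 0 := fun w hw => dif_neg hw
    have hc' : ∀ w, len n w = m → ((c w : Ssub n) : R n) = dem n w f := fun w hw => by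
      simp only [c]; rw [dif_pos hw]
    have hg : ∑ w, c w • schubert n w ∈ Submodule.span (Ssub n) (Set.range (schubert n)) :=
      Submodule.sum_mem _ fun w _ => Submodule.smul_mem _ _ (Submodule.subset_span ⟨w, rfl⟩)
    have := ih (f - ∑ w, c w • schubert n w) (by
      intro v hv
      obtain ⟨L, hL⟩ := dem_lin v
      rw [← hL, map_sub, map_sum, hL]
      have hs : ∀ w, L (c w • schubert n w) = c w • dem n v (schubert n w) := fun w => by
        rw [L.map_smul, hL]
      rw [Finset.sum_congr rfl (fun w _ => hs w)]
      rw [Finset.sum_eq_single v]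
      · rw [dem_schub_ge v v le_rfl, if_pos rfl, Algebra.smul_def, mul_one]
        change _ - ((c v : Ssub n) : R n) = 0
        rcases hv.eq_or_lt with h1 | h1
        · rw [hc' v h1.symm, sub_self]
        · rw [hc v (by omega), h v h1]; simp
      · intro w _ hw
        by_cases hwm : len n w = m
        · rw [dem_schub_ge w v (by omega), if_neg hw.symm, smul_zero]
        · rw [hc w hwm, zero_smul]
      · intro h; exact absurd (Finset.mem_univ v) h)
    have h3 := Submodule.add_mem _ this hg
    rwa [sub_add_cancel] at h3

lemma span_schub (f : R n) : f ∈ Submodule.span (Ssub n) (Set.range (schubert n)) := by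
  apply span_aux (n.choose 2 + 1) f
  intro v hv
  have := len_le v
  omega

end Pf

namespace Pf

variable {n : ℕ}

/-- sign change of variables -/
def ng (n : ℕ) : R n →ₐ[ℂ] R n := aeval (fun i => -(X i : R n))

/-- summand of `Sw` -/
def tm (w u : Equiv.Perm (Fin n)) : T n :=
  if len n (u * w⁻¹) + len n u = len n w then
    (ng n (schubert n (u * w⁻¹))) ⊗ₜ[Ssub n] schubert n u else 0

lemma Sw_eq (w : Equiv.Perm (Fin n)) : Sw n w = ∑ u, tm w u := by
  classical
  rw [Sw, ← Finset.add_sum_erase _ _ (Finset.mem_univ w)]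
  congr 1
  · rw [tm, if_pos]
    · rw [mul_inv_cancel, schubert_one, map_one]
    · rw [mul_inv_cancel, len_one, zero_add]
  · have : ∑ u ∈ Finset.univ.erase w, tm w u =
        ∑ u ∈ (Finset.univ.erase w).filter (fun u => len n (u * w⁻¹) + len n u = len n w),
          (ng n (schubert n (u * w⁻¹))) ⊗ₜ[Ssub n] schubert n u := by
      rw [Finset.sum_filter]
      rfl
    rw [this]
    refine Finset.sum_bij' (fun p _ => p.1) (fun u _ => (u, u * w⁻¹)) ?_ ?_ ?_ ?_ ?_
    · rintro ⟨u, v⟩ h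
      simp only [Finset.mem_filter, Finset.mem_univ, true_and, Finset.mem_erase, and_true] at h ⊢
      obtain ⟨rfl, h2, h3⟩ := h
      refine ⟨?_, ?_⟩
      · intro h; rw [← h] at h2; exact lt_irrefl _ h2
      · rw [mul_inv_rev, inv_inv, mul_inv_cancel_left, h3]
    · intro u h
      simp only [Finset.mem_filter, Finset.mem_univ, true_and, Finset.mem_erase, and_true] at h ⊢
      refine ⟨by simp, ?_, h.2.symm⟩
      have : len n (u * w⁻¹) ≠ 0 := by
        intro h0
        exact h.1 (mul_inv_eq_one.1 (eq_one_of_len _ h0))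
      omega
    · rintro ⟨u, v⟩ h
      simp only [Finset.mem_filter, Finset.mem_univ, true_and] at h
      obtain ⟨rfl, h2, h3⟩ := h
      simp
    · intro u h; rfl
    · rintro ⟨u, v⟩ h
      simp only [Finset.mem_filter, Finset.mem_univ, true_and] at h
      obtain ⟨rfl, h2, h3⟩ := h
      simp [ng]

lemma ng_rh (i : ℕ) (f : R n) : ng n (rh n i f) = rh n i (ng n f) := by
  have : (ng n).comp (rh n i) = (rh n i).comp (ng n) := by
    apply MvPolynomial.algHom_ext
    intro k
    simp [ng, rh_X]
  exact DFunLike.congr_fun this f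

lemma ng_al (i : ℕ) (hi : i + 1 < n) : ng n (al i hi) = - al i hi := by
  simp [al, ng]; ring

lemma dem_ng (i : ℕ) (f : R n) : demX n i (ng n f) = - ng n (demX n i f) := by
  by_cases hi : i + 1 < n
  · apply dem_uniq i hi
    have h := congrArg (ng n) (dem_spec i hi f)
    rw [map_mul, map_sub, ng_al, ng_rh] at h
    linear_combination h
  · simp [dem_out i hi]

/-- right Demazure operator -/
def DR (n i : ℕ) : T n →ₗ[Ssub n] T n := LinearMap.lTensor (R n) (demXL n i)
/-- left Demazure operator -/
def DL (n i : ℕ) : T n →ₗ[Ssub n] T n := LinearMap.rTensor (R n) (demXL n i)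

lemma DR_tmul (i : ℕ) (f g : R n) : DR n i (f ⊗ₜ g) = f ⊗ₜ demX n i g := rfl
lemma DL_tmul (i : ℕ) (f g : R n) : DL n i (f ⊗ₜ g) = demX n i f ⊗ₜ g := rfl

lemma len_tri (w u : Equiv.Perm (Fin n)) : len n w ≤ len n (u * w⁻¹) + len n u := by
  have := len_mul_le (u * w⁻¹)⁻¹ u
  rw [len_inv] at this
  simpa using this

lemma DR_down (w : Equiv.Perm (Fin n)) (i : ℕ) (hi : i + 1 < n)
    (h : len n (w * simpleRefl n i) + 1 = len n w) : DR n i (Sw n w) = Sw n (w * simpleRefl n i) := by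
  rw [Sw_eq, Sw_eq, map_sum, ← Equiv.sum_comp (Equiv.mulRight (simpleRefl n i))
    (fun u => tm (w * simpleRefl n i) u)]
  apply Finset.sum_congr rfl
  intro u _
  have e : u * simpleRefl n i * (w * simpleRefl n i)⁻¹ = u * w⁻¹ := by
    rw [mul_inv_rev]; simp
  change DR n i (tm w u) = tm (w * simpleRefl n i) (u * simpleRefl n i)
  rw [tm, tm, e]
  have h1 := len_tri w u
  rcases len_mul_sr u i hi with h2 | h2
  · have hn : ¬ (len n (u * w⁻¹) + len n (u * simpleRefl n i) = len n (w * simpleRefl n i)) := by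
      omega
    rw [if_neg hn]
    split_ifs
    · rw [DR_tmul, dem_schub_up u i h2, tmul_zero]
    · rw [map_zero]
  · by_cases hc : len n (u * w⁻¹) + len n u = len n w
    · rw [if_pos hc, if_pos (by omega), DR_tmul, dem_schub_down u i h2]
    · rw [if_neg hc, if_neg (by omega), map_zero]

lemma DR_up (w : Equiv.Perm (Fin n)) (i : ℕ) (hi : i + 1 < n)
    (h : len n (w * simpleRefl n i) = len n w + 1) : DR n i (Sw n w) = 0 := by
  rw [Sw_eq, map_sum]
  apply Finset.sum_eq_zero
  intro u _
  rw [tm]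
  have e : u * simpleRefl n i * (w * simpleRefl n i)⁻¹ = u * w⁻¹ := by
    rw [mul_inv_rev]; simp
  have h1 := len_tri (w * simpleRefl n i) (u * simpleRefl n i)
  rw [e] at h1
  split_ifs with hc
  · rcases len_mul_sr u i hi with h2 | h2
    · rw [DR_tmul, dem_schub_up u i h2, tmul_zero]
    · omega
  · rw [map_zero]

lemma DL_down (w : Equiv.Perm (Fin n)) (i : ℕ) (hi : i + 1 < n)
    (h : len n (simpleRefl n i * w) + 1 = len n w) :
    DL n i (Sw n w) = - Sw n (simpleRefl n i * w) := by
  rw [Sw_eq, Sw_eq, map_sum, ← Finset.sum_neg_distrib]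
  apply Finset.sum_congr rfl
  intro u _
  have e : u * (simpleRefl n i * w)⁻¹ = u * w⁻¹ * simpleRefl n i := by
    rw [mul_inv_rev, sr_inv, mul_assoc]
  rw [tm, tm, e]
  have h1 := len_tri w u
  rcases len_mul_sr (u * w⁻¹) i hi with h2 | h2
  · have hn : ¬ (len n (u * w⁻¹ * simpleRefl n i) + len n u = len n (simpleRefl n i * w)) := by
      omega
    rw [if_neg hn]
    split_ifs
    · rw [DL_tmul, dem_ng, dem_schub_up _ i h2, map_zero, neg_zero, zero_tmul, neg_zero]
    · rw [map_zero, neg_zero]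
  · by_cases hc : len n (u * w⁻¹) + len n u = len n w
    · rw [if_pos hc, if_pos (by omega), DL_tmul, dem_ng, dem_schub_down _ i h2, neg_tmul]
    · rw [if_neg hc, if_neg (by omega), map_zero, neg_zero]

lemma DL_up (w : Equiv.Perm (Fin n)) (i : ℕ) (hi : i + 1 < n)
    (h : len n (simpleRefl n i * w) = len n w + 1) : DL n i (Sw n w) = 0 := by
  rw [Sw_eq, map_sum]
  apply Finset.sum_eq_zero
  intro u _
  rw [tm]
  have e : u * (simpleRefl n i * w)⁻¹ = u * w⁻¹ * simpleRefl n i := by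
    rw [mul_inv_rev, sr_inv, mul_assoc]
  have h1 := len_tri (simpleRefl n i * w) u
  rw [e] at h1
  split_ifs with hc
  · rcases len_mul_sr (u * w⁻¹) i hi with h2 | h2
    · rw [DL_tmul, dem_ng, dem_schub_up _ i h2, map_zero, neg_zero, zero_tmul]
    · omega
  · rw [map_zero]

lemma Fw_tmul (w : Equiv.Perm (Fin n)) (f g : R n) : Fw n w (f ⊗ₜ g) = f * rename w g := by
  exact Algebra.TensorProduct.productMap_apply_tmul (AlgHom.id (Ssub n) (R n)) (renameS n w) f g

lemma Fw_one_tmul (f g : R n) : Fw n 1 (f ⊗ₜ g) = f * g := by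
  rw [Fw_tmul]; simp

lemma Fw_DR (w : Equiv.Perm (Fin n)) (i : ℕ) (hi : i + 1 < n) (z : T n) :
    Fw n (w * simpleRefl n i) z = Fw n w z - rename w (al i hi) * Fw n w (DR n i z) := by
  induction z using TensorProduct.induction_on with
  | zero => simp
  | tmul f g =>
    rw [DR_tmul, Fw_tmul, Fw_tmul, Fw_tmul, mul_left_comm, ← map_mul, dem_spec, map_sub, rh,
      rename_rename, Equiv.Perm.coe_mul]
    ring
  | add x y hx hy =>
    rw [map_add, map_add, map_add, map_add, hx, hy]; ring

lemma dem_F1 (i : ℕ) (hi : i + 1 < n) (z : T n) :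
    demX n i (Fw n 1 z) = Fw n 1 (DL n i z) + Fw n 1 (DR n i z)
      - al i hi * Fw n 1 (DR n i (DL n i z)) := by
  induction z using TensorProduct.induction_on with
  | zero => simp [dem_zero]
  | tmul f g =>
    rw [DL_tmul, DR_tmul, DR_tmul, Fw_one_tmul, Fw_one_tmul, Fw_one_tmul, Fw_one_tmul]
    apply dem_uniq i hi
    have h1 := dem_spec i hi f
    have h2 := dem_spec i hi g
    rw [map_mul]
    have h3 : rh n i f = f - al i hi * demX n i f := by rw [h1]; ring
    have h4 : rh n i g = g - al i hi * demX n i g := by rw [h2]; ring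
    rw [h3, h4]; ring
  | add x y hx hy =>
    simp only [map_add, dem_add, hx, hy]; ring

lemma Sw_one : Fw n 1 (Sw n 1) = 1 := by
  rw [Sw_eq, map_sum, Finset.sum_eq_single 1]
  · rw [tm, if_pos] 
    · simp [schubert_one, Fw_one_tmul]
    · simp [len_one]
  · intro u _ hu
    rw [tm, if_neg, map_zero]
    intro h
    apply hu
    apply eq_one_of_len
    rw [len_one] at h
    omega
  · simp

/-- polynomials not involving the last variable -/
lemma schub_supp {m : ℕ} (w : Equiv.Perm (Fin (m + 1))) :
    schubert (m + 1) w ∈ supported ℂ ({Fin.last m}ᶜ : Set (Fin (m + 1))) := by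
  rw [mem_supported]
  intro k hk
  rw [Set.mem_compl_singleton_iff]
  rintro rfl
  have h1 := schub_deg w (Fin.last m)
  simp only [Fin.val_last, Nat.add_sub_cancel, Nat.sub_self, Nat.le_zero] at h1
  classical
  rw [degreeOf_def, Multiset.count_eq_zero] at h1
  apply h1
  simpa [vars_def] using hk

lemma ng_supp {s : Set (Fin n)} {f : R n} (hf : f ∈ supported ℂ s) : ng n f ∈ supported ℂ s := by
  have : (supported ℂ s) ≤ (supported ℂ s).comap (ng n) := by
    conv_lhs => rw [supported]
    rw [Algebra.adjoin_le_iff]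
    rintro _ ⟨i, hi, rfl⟩
    simp only [Subalgebra.coe_comap, Set.mem_preimage, ng, aeval_X, SetLike.mem_coe]
    exact neg_mem (X_mem_supported.2 hi)
  exact this hf

lemma F1_Sw (u : Equiv.Perm (Fin n)) (hu : u ≠ 1) : Fw n 1 (Sw n u) = 0 := by
  induction hk : len n u using Nat.strong_induction_on generalizing u with
  | _ k ih =>
  have hsym : (Fw n 1 (Sw n u)).IsSymmetric := by
    apply sym_of_rh
    intro i hi
    rw [← dem_eq_zero_iff i hi, dem_F1 i hi]
    by_cases hus : u = simpleRefl n i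
    · have hd : len n (simpleRefl n i * u) + 1 = len n u := by
        rcases len_sr_mul u i hi with h | h
        · rw [hus, sr_mul_self, len_one] at h; omega
        · exact h
      have hd' : len n (u * simpleRefl n i) + 1 = len n u := by
        rw [← hd, hus]
      rw [DL_down u i hi hd, DR_down u i hi hd', map_neg, map_neg, map_neg, hus, sr_mul_self,
        Sw_one, DR_up _ _ hi]
      · simp
      · rw [one_mul, len_one]
        rw [hus, sr_mul_self, len_one] at hd
        omega
    · have h1 : Fw n 1 (DR n i (Sw n u)) = 0 := by
        rcases len_mul_sr u i hi with h | h
        · rw [DR_up u i hi h, map_zero]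
        · rw [DR_down u i hi h]
          apply ih _ (by omega) _ _ rfl
          intro h1
          apply hus
          rw [mul_eq_one_iff_eq_inv, sr_inv] at h1
          exact h1
      have h2 : Fw n 1 (DL n i (Sw n u)) = 0 ∧ Fw n 1 (DR n i (DL n i (Sw n u))) = 0 := by
        rcases len_sr_mul u i hi with h | h
        · rw [DL_up u i hi h, map_zero, map_zero, map_zero]; exact ⟨rfl, rfl⟩
        · rw [DL_down u i hi h, map_neg, map_neg, map_neg, neg_eq_zero, neg_eq_zero]
          constructor
          · apply ih _ (by omega) _ _ rfl
            intro h1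
            apply hus
            rw [mul_eq_one_iff_inv_eq, sr_inv] at h1
            exact h1.symm
          · rcases len_mul_sr (simpleRefl n i * u) i hi with h' | h'
            · rw [DR_up _ i hi h', map_zero]
            · rw [DR_down _ i hi h']
              apply ih _ (by omega) _ _ rfl
              intro h1
              apply hu
              rw [mul_eq_one_iff_eq_inv, sr_inv] at h1
              have := congrArg (simpleRefl n i * ·) h1
              simpa [sr_sr_mul, sr_mul_self] using this
      rw [h1, h2.1, h2.2]; simp
  have hconst : constantCoeff (Fw n 1 (Sw n u)) = 0 := by
    rw [Sw_eq, map_sum, map_sum]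
    apply Finset.sum_eq_zero
    intro v _
    rw [tm]
    split_ifs with hc
    · rw [Fw_one_tmul, map_mul]
      by_cases hv : v = 1
      · have h1 : v * u⁻¹ ≠ 1 := by
          rw [hv, one_mul]; simpa using hu
        have h2 : ∀ f : R n, constantCoeff (ng n f) = constantCoeff f := by
          intro f
          have : (constantCoeff : R n →+* ℂ).comp (ng n : R n →+* R n) = constantCoeff := by
            apply MvPolynomial.ringHom_ext
            · intro r; simp [ng]
            · intro k; simp [ng]
          exact DFunLike.congr_fun this f
        rw [h2, schub_const _ h1, zero_mul]
      · rw [schub_const _ hv, mul_zero]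
    · simp
  rcases n with _ | m
  · exact absurd (Subsingleton.elim _ _) hu
  have hsupp : Fw (m + 1) 1 (Sw (m + 1) u) ∈
      supported ℂ ({Fin.last m}ᶜ : Set (Fin (m + 1))) := by
    rw [Sw_eq, map_sum]
    apply Subalgebra.sum_mem
    intro v _
    rw [tm]
    split_ifs
    · rw [Fw_one_tmul]
      exact Subalgebra.mul_mem _ (ng_supp (schub_supp _)) (schub_supp _)
    · rw [map_zero]; exact Subalgebra.zero_mem _
  generalize Fw (m + 1) 1 (Sw (m + 1) u) = G at *
  have hv : G.vars = ∅ := by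
    rw [Finset.eq_empty_iff_forall_notMem]
    intro k hk
    rw [mem_supported] at hsupp
    classical
    have h1 : (rename (Equiv.swap k (Fin.last m)) G).vars = G.vars := by rw [hsym]
    have h2 := degreeOf_rename_of_injective (p := G) (Equiv.swap k (Fin.last m)).injective k
    rw [hsym, Equiv.swap_apply_left] at h2
    have h3 : degreeOf (Fin.last m) G = 0 := by
      rw [degreeOf_def, Multiset.count_eq_zero]
      intro h
      have := hsupp (a := Fin.last m) (by simpa [vars_def] using h)
      simp at this
    rw [h3, eq_comm, degreeOf_def, Multiset.count_eq_zero] at h2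
    apply h2
    simpa [vars_def] using hk
  rw [vars_eq_empty_iff_eq_C, ← constantCoeff_eq, hconst, C_0] at hv
  exact hv

lemma F_Sw (w : Equiv.Perm (Fin n)) :
    Fw n w (Sw n w) ≠ 0 ∧ ∀ u, len n w ≤ len n u → u ≠ w → Fw n w (Sw n u) = 0 := by
  induction hk : len n w generalizing w with
  | zero =>
    rw [eq_one_of_len w hk]
    refine ⟨?_, fun u _ hu => F1_Sw u hu⟩
    rw [Sw_one]; exact one_ne_zero
  | succ k ih =>
    obtain ⟨i, hi, hd⟩ := exists_right_descent w (by rintro rfl; rw [len_one] at hk; omega)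
    obtain ⟨v, rfl⟩ : ∃ v, w = v * simpleRefl n i := ⟨w * simpleRefl n i, by rw [mul_sr_sr]⟩
    rw [mul_sr_sr] at hd
    obtain ⟨ih1, ih2⟩ := ih v (by omega)
    refine ⟨?_, ?_⟩
    · rw [Fw_DR v i hi, ih2 _ (by omega), zero_sub, neg_ne_zero, DR_down _ i hi, mul_sr_sr]
      · apply mul_ne_zero _ ih1
        rw [Ne, map_eq_zero_iff _ (rename_injective _ v.injective)]
        exact al_ne i hi
      · rw [mul_sr_sr]; exact hd
      · intro h; rw [h] at hd; omega
    · intro u hu hne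
      rw [Fw_DR v i hi, ih2 u (by omega), zero_sub, neg_eq_zero]
      · rcases len_mul_sr u i hi with h | h
        · rw [DR_up u i hi h, map_zero, mul_zero]
        · rw [DR_down u i hi h, ih2 _ (by omega), mul_zero]
          intro h1
          apply hne
          rw [← h1, mul_sr_sr]
      · rintro rfl
        omega

lemma Fw_smul (w : Equiv.Perm (Fin n)) (r : R n) (z : T n) : Fw n w (r • z) = r * Fw n w z := by
  induction z using TensorProduct.induction_on with
  | zero => simp
  | tmul f g => rw [TensorProduct.smul_tmul', Fw_tmul, Fw_tmul, smul_eq_mul, mul_assoc]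
  | add x y hx hy => rw [smul_add, map_add, map_add, hx, hy, mul_add]

lemma schub_mem (w : Equiv.Perm (Fin n)) :
    (1 : R n) ⊗ₜ[Ssub n] schubert n w ∈ Submodule.span (R n) (Set.range (Sw n)) := by
  induction hk : len n w using Nat.strong_induction_on generalizing w with
  | _ k ih =>
    have h : (1 : R n) ⊗ₜ[Ssub n] schubert n w = Sw n w - (Sw n w - (1 : R n) ⊗ₜ[Ssub n] schubert n w) := by
      abel
    rw [h]
    refine Submodule.sub_mem _ (Submodule.subset_span ⟨w, rfl⟩) ?_
    rw [Sw, add_sub_cancel_left]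
    refine Submodule.sum_mem _ ?_
    rintro ⟨u, v⟩ hp
    have hlt : len n u < len n w := (Finset.mem_filter.1 hp).2.2.1
    have e : ∀ r g : R n, r ⊗ₜ[Ssub n] g = r • ((1 : R n) ⊗ₜ[Ssub n] g) := by
      intro r g
      rw [TensorProduct.smul_tmul', smul_eq_mul, mul_one]
    rw [e]
    exact Submodule.smul_mem _ _ (ih _ (by omega) u rfl)

lemma span_top (z : T n) : z ∈ Submodule.span (R n) (Set.range (Sw n)) := by
  have e : ∀ r g : R n, r ⊗ₜ[Ssub n] g = r • ((1 : R n) ⊗ₜ[Ssub n] g) := by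
    intro r g
    rw [TensorProduct.smul_tmul', smul_eq_mul, mul_one]
  induction z using TensorProduct.induction_on with
  | zero => exact Submodule.zero_mem _
  | add x y hx hy => exact Submodule.add_mem _ hx hy
  | tmul f g =>
    rw [e]
    apply Submodule.smul_mem
    have := span_schub g
    induction this using Submodule.span_induction with
    | mem x hx => obtain ⟨w, rfl⟩ := hx; exact schub_mem w
    | zero => rw [tmul_zero]; exact Submodule.zero_mem _
    | add x y _ _ hx hy => rw [tmul_add]; exact Submodule.add_mem _ hx hy
    | smul a x _ hx =>
      rw [← TensorProduct.smul_tmul, e]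
      exact Submodule.smul_mem _ _ hx

lemma main (n j : ℕ) (z : T n) :
    z ∈ Submodule.span (R n) {z : T n | ∃ w, j ≤ len n w ∧ z = Sw n w} ↔
      ∀ w : Equiv.Perm (Fin n), len n w < j → Fw n w z = 0 := by
  constructor
  · intro hz w hw
    induction hz using Submodule.span_induction with
    | mem x hx =>
      obtain ⟨u, hu, rfl⟩ := hx
      apply (F_Sw w).2 u (by omega)
      rintro rfl; omega
    | zero => rw [map_zero]
    | add x y _ _ hx hy => rw [map_add, hx, hy, add_zero]
    | smul a x _ hx => rw [Fw_smul, hx, mul_zero]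
  · intro hz
    obtain ⟨c, rfl⟩ := (Submodule.mem_span_range_iff_exists_fun (R n)).1 (span_top z)
    have hc : ∀ k, ∀ w, len n w = k → k < j → c w = 0 := by
      intro k
      induction k using Nat.strong_induction_on with
      | _ k ih =>
        intro w hw hkj
        have h := hz w (by omega)
        rw [map_sum, Finset.sum_eq_single w] at h
        · rw [Fw_smul] at h
          exact (mul_eq_zero.1 h).resolve_right (F_Sw w).1
        · intro u _ hu
          rw [Fw_smul]
          by_cases hl : len n u < len n w
          · rw [ih (len n u) (by omega) u rfl (by omega), zero_mul]
          · rw [(F_Sw w).2 u (by omega) hu, mul_zero]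
        · intro h; exact absurd (Finset.mem_univ w) h
    refine Submodule.sum_mem _ fun w _ => ?_
    by_cases hw : len n w < j
    · rw [hc _ w rfl hw, zero_smul]; exact Submodule.zero_mem _
    · exact Submodule.smul_mem _ _ (Submodule.subset_span ⟨w, by omega, rfl⟩)

end Pf

/-- For `0 ≤ j ≤ n(n-1)/2 + 1`, the left `R`-submodule `Γ_j` of
`R ⊗_{R^{S_n}} R` spanned by `{S_w : ℓ(w) ≥ j}` equals the kernel of the `R`-bimodule
homomorphism `⊕_{ℓ(w) < j} F_w`; in particular `Γ_j` is stable under the right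
`R`-action `z ↦ z · (1 ⊗ g)`. -/
theorem statement6 (n j : ℕ) (hj : j ≤ n.choose 2 + 1) :
    (∀ z : T n,
        z ∈ Submodule.span (R n) {z : T n | ∃ w, j ≤ len n w ∧ z = Sw n w} ↔
        ∀ w : Equiv.Perm (Fin n), len n w < j → Fw n w z = 0) ∧
    (∀ z ∈ Submodule.span (R n) {z : T n | ∃ w, j ≤ len n w ∧ z = Sw n w}, ∀ g : R n,
        z * ((1 : R n) ⊗ₜ[Ssub n] g) ∈
          Submodule.span (R n) {z : T n | ∃ w, j ≤ len n w ∧ z = Sw n w}) := by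
  refine ⟨fun z => Pf.main n j z, fun z hz g => ?_⟩
  rw [Pf.main] at hz ⊢
  intro w hw
  rw [map_mul, hz w hw, zero_mul]
end
end

section
/- Let Φ : T → T' be an exact (triangulated) ℂ-linear functor between ℂ-linear triangulated categories, and let P_σ, P_ω be slicings on T' with σ ⪅ ω. For θ ∈ ℝ define full subcategories of T by Q_σ(θ) = {E ∈ T : Φ(E) ∈ P_σ(θ)} and Q_ω(θ) = {E ∈ T : Φ(E) ∈ P_ω(θ)}. If the families Q_σ and Q_ω are slicings on T, then Q_σ ⪅ Q_ω. (This is the slicing-level content of Lemma 3.3 of the paper, which is applied there with Φ = f^* to compare the pushforward pre-stability conditions f_*σ ⪅ f_*ω, and with Φ = f_* to compare the pullbacks f^*σ ⪅ f^*ω, for a finite morphism f of smooth projective varieties.) -/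
open CategoryTheory Limits Pretriangulated

universe v u

variable (C : Type u) [Category.{v} C] [Preadditive C] [HasZeroObject C]
  [Linear ℂ C]
  [HasShift C ℤ] [∀ n : ℤ, (shiftFunctor C n).Additive] [Pretriangulated C]

/-- A slicing on a triangulated category (Bridgeland): a collection of full additive
subcategories `P(θ)`, `θ ∈ ℝ`, each given by its set of objects, such that
`P(θ)[1] = P(θ+1)`, there are no nonzero morphisms from `P(θ₁)` to `P(θ₂)` for `θ₁ > θ₂`,
and every nonzero object has a Harder–Narasimhan filtration by distinguished triangles with
nonzero factors of strictly decreasing phases. -/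
structure Slicing where
  /-- the set of objects of the full additive subcategory `P(θ)` -/
  P : ℝ → Set C
  /-- `P(θ)` contains the zero objects (it is an additive subcategory) -/
  zero_mem : ∀ (θ : ℝ) (E : C), IsZero E → E ∈ P θ
  /-- `P(θ)[1] = P(θ + 1)` -/
  shift_mem : ∀ (θ : ℝ) (E : C), E ∈ P θ ↔ (E⟦(1 : ℤ)⟧ ∈ P (θ + 1))
  /-- if `θ₁ > θ₂`, `F₁ ∈ P(θ₁)` and `F₂ ∈ P(θ₂)`, then `Hom(F₁, F₂) = 0` -/
  hom_zero : ∀ (θ₁ θ₂ : ℝ), θ₂ < θ₁ → ∀ (F₁ F₂ : C), F₁ ∈ P θ₁ → F₂ ∈ P θ₂ →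
    ∀ f : F₁ ⟶ F₂, f = 0
  /-- Harder–Narasimhan filtrations: every nonzero object `E` admits a finite sequence of
  distinguished triangles `E_{i-1} → E_i → A_i → E_{i-1}[1]` with `E_0 = 0`, `E_m = E`, and
  nonzero factors `A_i ∈ P(θ_i)` with `θ_1 > θ_2 > ⋯ > θ_m` -/
  hn : ∀ E : C, ¬ IsZero E →
    ∃ (m : ℕ) (Eseq : ℕ → C) (A : ℕ → C) (θ : ℕ → ℝ),
      IsZero (Eseq 0) ∧ Eseq m = E ∧
      (∀ i : ℕ, 1 ≤ i → i < m → θ (i + 1) < θ i) ∧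
      (∀ i : ℕ, 1 ≤ i → i ≤ m →
        ¬ IsZero (A i) ∧ A i ∈ P (θ i) ∧
        ∃ (f : Eseq (i - 1) ⟶ Eseq i) (g : Eseq i ⟶ A i)
          (h : A i ⟶ (Eseq (i - 1))⟦(1 : ℤ)⟧),
          Triangle.mk f g h ∈ distinguishedTriangles)

variable {C}

/-- The extension-closed full additive subcategory of `C` generated by a set `S` of objects:
the smallest class of objects containing `S` and the zero objects and stable under
extensions by distinguished triangles. -/
inductive ExtClosed (S : Set C) : C → Prop
  | of {E : C} : E ∈ S → ExtClosed S E
  | zero {E : C} : IsZero E → ExtClosed S E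
  | ext {A E B : C} (f : A ⟶ E) (g : E ⟶ B) (h : B ⟶ A⟦(1 : ℤ)⟧) :
      Triangle.mk f g h ∈ distinguishedTriangles →
      ExtClosed S A → ExtClosed S B → ExtClosed S E

/-- `P((-∞, θ])`: the smallest extension-closed full additive subcategory of `C`
containing all `P(θ')` with `θ' ≤ θ`. -/
def Slicing.le (σ : Slicing C) (θ : ℝ) : Set C :=
  {E | ExtClosed {F | ∃ θ' ≤ θ, F ∈ σ.P θ'} E}

/-- `σ ⪅ ω` iff `P_σ(θ) ⊆ P_ω((-∞, θ])` for every `θ ∈ ℝ`. -/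
def Slicing.lsm (σ ω : Slicing C) : Prop :=
  ∀ θ : ℝ, σ.P θ ⊆ ω.le θ


universe v' u'

/-- Vanishing of morphisms out of `X` passes to the extension closure. -/
theorem ExtClosed.hom_zero {S : Set C} {X : C} (hX : ∀ F ∈ S, ∀ f : X ⟶ F, f = 0)
    {E : C} (hE : ExtClosed S E) : ∀ f : X ⟶ E, f = 0 := by
  induction hE with
  | of h => exact hX _ h
  | zero h => exact fun f => h.eq_of_tgt _ _
  | ext f g h hT _ _ ihA ihB =>
    intro k
    obtain ⟨l, hl⟩ := Triangle.coyoneda_exact₂ _ hT k (ihB _)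
    rw [hl, ihA l]
    exact zero_comp

/-- Let `Φ : T ⥤ T'` be an exact (triangulated) `ℂ`-linear functor
between `ℂ`-linear triangulated categories, and let `P_σ, P_ω` be slicings on `T'` with
`σ ⪅ ω`. If the families `Q_σ(θ) = {E : Φ(E) ∈ P_σ(θ)}` and `Q_ω(θ) = {E : Φ(E) ∈ P_ω(θ)}`
are slicings on `T`, then `Q_σ ⪅ Q_ω`. -/
theorem statement10
    {D : Type u'} [Category.{v'} D] [Preadditive D] [HasZeroObject D] [Linear ℂ D]
    [HasShift D ℤ] [∀ n : ℤ, (shiftFunctor D n).Additive] [Pretriangulated D]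
    (Φ : C ⥤ D) [Φ.Additive] [Φ.Linear ℂ] [Φ.CommShift ℤ] [Φ.IsTriangulated]
    (Pσ Pω : Slicing D) (h : Pσ.lsm Pω)
    (Qσ Qω : Slicing C)
    (hQσ : ∀ θ : ℝ, Qσ.P θ = {E : C | Φ.obj E ∈ Pσ.P θ})
    (hQω : ∀ θ : ℝ, Qω.P θ = {E : C | Φ.obj E ∈ Pω.P θ}) :
    Qσ.lsm Qω := by
  intro θ E hE
  by_cases hE0 : IsZero E
  · exact ExtClosed.zero hE0
  obtain ⟨m, Es, A, t, hz, hm, ht, hA⟩ := Qω.hn E hE0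
  have hm1 : 1 ≤ m := by
    rcases Nat.eq_zero_or_pos m with h0 | h0
    · subst h0
      exact absurd (hm ▸ hz) hE0
    · exact h0
  have hle : ∀ i, 1 ≤ i → i ≤ m → t i ≤ t 1 := by
    intro i hi
    induction i, hi using Nat.le_induction with
    | base => intro _; exact le_rfl
    | succ i hi ih =>
      intro him
      exact (ht i hi (by omega)).le.trans (ih (by omega))
  have key : t 1 ≤ θ := by
    by_contra hlt
    push Not at hlt
    obtain ⟨hA1, hA1P, f1, g1, h1, hT1⟩ := hA 1 le_rfl hm1
    have hA1Φ : Φ.obj (A 1) ∈ Pω.P (t 1) := by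
      rw [hQω] at hA1P
      exact hA1P
    have hid : Φ.map (𝟙 (A 1)) ≠ 0 := by
      intro h0
      rw [Φ.map_id] at h0
      have hzero : IsZero (Φ.obj (A 1)) := (IsZero.iff_id_eq_zero _).2 h0
      have hmem : ∀ s, A 1 ∈ Qω.P s := by
        intro s
        rw [hQω]
        exact Pω.zero_mem s _ hzero
      exact hA1 ((IsZero.iff_id_eq_zero _).2
        (Qω.hom_zero 1 0 one_pos _ _ (hmem 1) (hmem 0) _))
    have hne : ∀ i, 1 ≤ i → i ≤ m → ∃ j : A 1 ⟶ Es i, Φ.map j ≠ 0 := by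
      intro i hi
      induction i, hi using Nat.le_induction with
      | base =>
        intro _
        have hz1 : IsZero ((Es (1 - 1))⟦(1 : ℤ)⟧) := (shiftFunctor C (1 : ℤ)).map_isZero hz
        obtain ⟨(j : A 1 ⟶ Es 1), (hj : 𝟙 (A 1) = j ≫ g1)⟩ := Triangle.coyoneda_exact₃ _ hT1 (𝟙 (A 1)) (hz1.eq_of_tgt _ _)
        refine ⟨j, fun h0 => hid ?_⟩
        rw [hj, Φ.map_comp, h0, zero_comp]
      | succ i hi ih =>
        intro him
        obtain ⟨j, hj⟩ := ih (by omega)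
        obtain ⟨-, hAiP, f, g, k, hT⟩ := hA (i + 1) (by omega) him
        rw [hQω] at hAiP
        refine ⟨j ≫ f, fun h0 => hj ?_⟩
        have hT' := Φ.map_distinguished _ hT
        apply (shiftFunctor D (1 : ℤ)).map_injective
        rw [Functor.map_zero]
        obtain ⟨l, hl⟩ := Triangle.coyoneda_exact₁ _ hT' ((Φ.map j)⟦(1 : ℤ)⟧') (by
          change (Φ.map j)⟦(1 : ℤ)⟧' ≫ (Φ.map f)⟦(1 : ℤ)⟧' = 0
          rw [← Functor.map_comp, ← Φ.map_comp, h0, Functor.map_zero])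
        have hl0 : l = 0 := Pω.hom_zero (t 1 + 1) (t (i + 1))
          (by linarith [hle (i + 1) (by omega) him]) _ _
          ((Pω.shift_mem _ _).1 hA1Φ) hAiP l
        refine hl.trans ?_
        rw [hl0]
        exact zero_comp
    obtain ⟨j, hj⟩ := hne m hm1 le_rfl
    subst hm
    rw [hQσ] at hE
    refine hj (ExtClosed.hom_zero ?_ (h θ hE) _)
    rintro F ⟨s, hs, hF⟩ q
    exact Pω.hom_zero (t 1) s (by linarith) _ _ hA1Φ hF q
  have hall : ∀ i, i ≤ m → ExtClosed {F | ∃ θ' ≤ θ, F ∈ Qω.P θ'} (Es i) := by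
    intro i
    induction i with
    | zero => intro _; exact ExtClosed.zero hz
    | succ i ih =>
      intro him
      obtain ⟨-, hAiP, f, g, k, hT⟩ := hA (i + 1) (by omega) him
      exact ExtClosed.ext f g k hT (ih (by omega))
        (ExtClosed.of ⟨t (i + 1), (hle _ (by omega) him).trans key, hAiP⟩)
  exact hm ▸ hall m le_rfl
end
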